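/- Let f : ℝ^d → ℝ be convex, and let p be a probability measure on ℝ^d with finite first moment, barycenter x̄ = ∫ x dp(x), and with f integrable with respect to p. Then ∫ f dp = f(x̄) if and only if there exist a ∈ ℝ^d and c ∈ ℝ such that f(x) = ⟨a, x⟩ + c for p-almost every x and f(x̄) = ⟨a, x̄⟩ + c; that is, equality in Jensen's inequality holds if and only if f coincides p-almost surely with an affine function that touches f at the barycenter. -/

import Mathlib

open MeasureTheory
open scoped RealInnerProductSpace

lemma exists_subgrad_aux {d : ℕ} {f : EuclideanSpace ℝ (Fin d) → ℝ}
    (hf : ConvexOn ℝ Set.univ f) (y : EuclideanSpace ℝ (Fin d)) :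
    ∃ a : EuclideanSpace ℝ (Fin d), ∀ x, f y + (⟪a, x⟫ - ⟪a, y⟫) ≤ f x := by
  have hc : Continuous f := by
    rw [← continuousOn_univ]
    exact hf.continuousOn isOpen_univ
  have hconv := hf.convex_strict_epigraph
  have hopen : IsOpen {q : EuclideanSpace ℝ (Fin d) × ℝ | q.1 ∈ Set.univ ∧ f q.1 < q.2} := by
    simp only [Set.mem_univ, true_and]
    exact isOpen_lt (hc.comp continuous_fst) continuous_snd
  obtain ⟨L, hL⟩ := geometric_hahn_banach_point_open (x := (y, f y)) hconv hopen (by simp)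
  have hdec : ∀ x t, L (x, t) = L (x, 0) + t * L (0, 1) := by
    intro x t
    have : (x, t) = (x, (0 : ℝ)) + t • ((0 : EuclideanSpace ℝ (Fin d)), (1 : ℝ)) := by simp
    rw [this, map_add, map_smul, smul_eq_mul]
  have hb : 0 < L (0, 1) := by
    have h := hL (y, f y + 1) (by simp)
    rw [hdec y (f y), hdec y (f y + 1)] at h
    linarith
  have hle : ∀ x, L (y, 0) + f y * L (0, 1) ≤ L (x, 0) + f x * L (0, 1) := by
    intro x
    refine le_of_forall_pos_lt_add fun e he => ?_
    have h := hL (x, f x + e / L (0, 1)) (by simp; positivity)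
    rw [hdec y (f y), hdec x (f x + _), add_mul, div_mul_cancel₀ _ hb.ne'] at h
    linarith
  let g : EuclideanSpace ℝ (Fin d) →L[ℝ] ℝ := L.comp (ContinuousLinearMap.inl ℝ _ ℝ)
  refine ⟨(InnerProductSpace.toDual ℝ _).symm (-(L (0, 1))⁻¹ • g), fun x => ?_⟩
  rw [InnerProductSpace.toDual_symm_apply, InnerProductSpace.toDual_symm_apply]
  have h := hle x
  have hg : ∀ z, (-(L (0, 1))⁻¹ • g) z = -(L (0, 1))⁻¹ * L (z, 0) := fun z => rfl
  rw [hg, hg]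
  refine le_of_mul_le_mul_right ?_ hb
  have : (f y + (-(L (0, 1))⁻¹ * L (x, 0) - -(L (0, 1))⁻¹ * L (y, 0))) * L (0, 1)
      = f y * L (0, 1) - L (x, 0) + L (y, 0) := by
    field_simp
    ring
  rw [this]
  linarith

/-- Equality case of Jensen's inequality: for a convex `f : ℝ^d → ℝ` and a
probability measure `p` with finite first moment and `f` integrable, `∫ f dp = f(x̄)` (with
`x̄ = ∫ x dp`) iff `f` coincides `p`-a.s. with an affine function `⟨a, ·⟩ + c` that also
touches `f` at the barycenter. -/
theorem jensen_equality_iff_affine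
    (d : ℕ) (f : EuclideanSpace ℝ (Fin d) → ℝ)
    (hf : ConvexOn ℝ Set.univ f)
    (p : Measure (EuclideanSpace ℝ (Fin d))) [IsProbabilityMeasure p]
    (hmom : Integrable (fun x => x) p) (hfi : Integrable f p) :
    (∫ x, f x ∂p = f (∫ x, x ∂p)) ↔
      ∃ (a : EuclideanSpace ℝ (Fin d)) (c : ℝ),
        (∀ᵐ x ∂p, f x = ⟪a, x⟫ + c) ∧ f (∫ x, x ∂p) = ⟪a, ∫ x, x ∂p⟫ + c := by
  have hint : ∀ a : EuclideanSpace ℝ (Fin d), Integrable (fun x => ⟪a, x⟫) p :=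
    fun a => hmom.const_inner a
  have hval : ∀ a : EuclideanSpace ℝ (Fin d), ∫ x, ⟪a, x⟫ ∂p = ⟪a, ∫ x, x ∂p⟫ :=
    fun a => integral_inner hmom a
  constructor
  · intro h
    obtain ⟨a, ha⟩ := exists_subgrad_aux hf (∫ x, x ∂p)
    set m := ∫ x, x ∂p with hm
    refine ⟨a, f m - ⟪a, m⟫, ?_, by ring⟩
    have hi2 : Integrable (fun x => ⟪a, x⟫ + (f m - ⟪a, m⟫)) p :=
      (hint a).add (integrable_const _)
    have h0 : ∫ x, (f x - (⟪a, x⟫ + (f m - ⟪a, m⟫))) ∂p = 0 := by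
      rw [integral_sub hfi hi2, integral_add (hint a) (integrable_const _), hval a, h]
      simp
    have hi3 : Integrable (fun x => f x - (⟪a, x⟫ + (f m - ⟪a, m⟫))) p := hfi.sub hi2
    rw [integral_eq_zero_iff_of_nonneg (fun x => by
      have := ha x
      simp only [Pi.zero_apply]
      linarith) hi3] at h0
    filter_upwards [h0] with x hx
    simp only [Pi.zero_apply] at hx
    linarith
  · rintro ⟨a, c, hae, hx⟩
    rw [integral_congr_ae hae, integral_add (hint a) (integrable_const _), hval a, hx]
    simp
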